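/- Let x and y be two distinct points of the separable Hilbert space ℓ² and let S ⊆ ℓ² be a set with x, y ∈ ℓ² \ S such that S intersects every continuum in ℓ² containing both x and y. Then S (with the subspace topology) is strongly infinite dimensional. -/

import Mathlib

open Set

/-- A separator between `A` and `B` in a topological space: a closed set `L` whose
complement is the union of two disjoint open sets containing `A` and `B` respectively. -/
def IsSeparator {X : Type*} [TopologicalSpace X] (A B L : Set X) : Prop :=
  IsClosed L ∧ ∃ U V : Set X, IsOpen U ∧ IsOpen V ∧ Disjoint U V ∧
    A ⊆ U ∧ B ⊆ V ∧ Lᶜ = U ∪ V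

/-- A family of pairs of sets is essential if every choice of separators has
nonempty intersection. -/
def IsEssentialFamily {X : Type*} [TopologicalSpace X] {Γ : Type*}
    (A B : Γ → Set X) : Prop :=
  ∀ L : Γ → Set X, (∀ i, IsSeparator (A i) (B i) (L i)) → (⋂ i, L i).Nonempty

/-- A space is strongly infinite dimensional if it admits a countably infinite
essential family of pairs of disjoint closed subsets. -/
def StronglyInfiniteDimensional (X : Type*) [TopologicalSpace X] : Prop :=
  ∃ A B : ℕ → Set X,
    (∀ n, IsClosed (A n) ∧ IsClosed (B n) ∧ Disjoint (A n) (B n)) ∧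
    IsEssentialFamily A B

/-- The separable Hilbert space `ℓ²` of square-summable real sequences. -/
abbrev EllTwo : Type := lp (fun _ : ℕ => ℝ) 2

/-!
Embed a suspension of the Hilbert cube with vertices `x` and `y` into the ambient space. The image
of a slab near a face of the cube is compact, and away from the vertices opposite slabs have
disjoint images, so their traces on `S` are pairs of disjoint closed sets. Separators of these
pairs in `S` pull back to the part of the cube lying over `S` and, by complete normality, extend
to separators of the opposite faces of the cube. The faces of a cube form an essential family, and
therefore the intersection of these separators contains a continuum joining the bottom of the
suspension to its top. Its image joins `x` and `y`, hence meets `S`, in a point of all the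
separators.

The faces of a finite cube are essential because of Kuhn's cubical Sperner lemma: label each vertex
of a fine grid by its side of each separator. The mod 2 cup product of the coboundaries of these
labels integrates to `1` by Stokes' theorem, so it is nonzero on some small cube, and every label
takes both values on that cube.
-/

open scoped unitInterval

/-! ### Separators and essential families -/

section Separators

variable {X Y Γ : Type*} [TopologicalSpace X] [TopologicalSpace Y]

theorem IsSeparator.mono {A A' B B' L : Set X} (h : IsSeparator A B L) (hA : A' ⊆ A)
    (hB : B' ⊆ B) : IsSeparator A' B' L := by
  obtain ⟨hL, U, V, hU, hV, hUV, hAU, hBV, hLUV⟩ := h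
  exact ⟨hL, U, V, hU, hV, hUV, hA.trans hAU, hB.trans hBV, hLUV⟩

theorem IsSeparator.preimage {A B L : Set X} (h : IsSeparator A B L) {f : Y → X}
    (hf : Continuous f) : IsSeparator (f ⁻¹' A) (f ⁻¹' B) (f ⁻¹' L) := by
  obtain ⟨hL, U, V, hU, hV, hUV, hAU, hBV, hLUV⟩ := h
  refine ⟨hL.preimage hf, f ⁻¹' U, f ⁻¹' V, hU.preimage hf, hV.preimage hf, hUV.preimage f,
    preimage_mono hAU, preimage_mono hBV, ?_⟩
  rw [← preimage_compl, hLUV, preimage_union]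

theorem exists_isSeparator_of_separatedNhds {A B : Set X} (h : SeparatedNhds A B) :
    ∃ L, IsSeparator A B L ∧ Disjoint L (A ∪ B) := by
  obtain ⟨U, V, hU, hV, hAU, hBV, hUV⟩ := h
  exact ⟨(U ∪ V)ᶜ, ⟨(hU.union hV).isClosed_compl, U, V, hU, hV, hUV, hAU, hBV, compl_compl _⟩,
    disjoint_compl_left.mono_right (union_subset_union hAU hBV)⟩

theorem separatedNhds_union_of_isClosed [CompletelyNormalSpace X] {s t A B : Set X}
    (hst : Disjoint (closure s) t) (hts : Disjoint s (closure t)) (hA : IsClosed A)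
    (hB : IsClosed B) (hAB : Disjoint A B) (hsB : Disjoint (closure s) B)
    (hAt : Disjoint A (closure t)) : SeparatedNhds (s ∪ A) (t ∪ B) := by
  refine separatedNhds_iff_disjoint.2 (completely_normal ?_ ?_)
  · rw [closure_union, hA.closure_eq, disjoint_union_left, disjoint_union_right,
      disjoint_union_right]
    exact ⟨⟨hst, hsB⟩, hAt.mono_right subset_closure, hAB⟩
  · rw [closure_union, hB.closure_eq, disjoint_union_left, disjoint_union_right,
      disjoint_union_right]
    exact ⟨⟨hts, hsB.mono_left subset_closure⟩, hAt, hAB⟩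

-- The thickenings `P`, `Q` keep `A`, `B` away from the closures in `X` of the two sides of `L`.
theorem IsSeparator.exists_extension [CompletelyNormalSpace X] {M P Q A B : Set X} {L : Set M}
    (hL : IsSeparator (((↑) : M → X) ⁻¹' P) ((↑) ⁻¹' Q) L) (hA : IsClosed A) (hB : IsClosed B)
    (hAB : Disjoint A B) (hAP : A ⊆ interior P) (hBQ : B ⊆ interior Q) :
    ∃ L', IsSeparator A B L' ∧ ((↑) : M → X) ⁻¹' L' ⊆ L := by
  obtain ⟨-, _, _, ⟨U, hU, rfl⟩, ⟨V, hV, rfl⟩, hUV, hPU, hQV, hLUV⟩ := hL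
  have notMem_V {a : X} (ha : a ∈ M ∩ U) : a ∉ V :=
    hUV.notMem_of_mem_left (a := ⟨a, ha.1⟩) ha.2
  have notMem_U {a : X} (ha : a ∈ M ∩ V) : a ∉ U := fun haU => notMem_V ⟨ha.1, haU⟩ ha.2
  have notMem_Q {a : X} (ha : a ∈ M ∩ U) : a ∉ Q := fun haQ =>
    notMem_V ha (@hQV ⟨a, ha.1⟩ haQ)
  have notMem_P {a : X} (ha : a ∈ M ∩ V) : a ∉ P := fun haP =>
    notMem_U ha (@hPU ⟨a, ha.1⟩ haP)
  have hsep : SeparatedNhds (M ∩ U ∪ A) (M ∩ V ∪ B) := by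
    refine separatedNhds_union_of_isClosed ?_ ?_ hA hB hAB ?_ ?_
    · exact (Disjoint.closure_left (disjoint_left.2 fun a => notMem_V) hV).mono_right
        inter_subset_right
    · exact (Disjoint.closure_right (disjoint_right.2 fun a => notMem_U) hU).mono_left
        inter_subset_right
    · exact (Disjoint.closure_left (disjoint_left.2 fun a ha haQ =>
        notMem_Q ha (interior_subset haQ)) isOpen_interior).mono_right hBQ
    · exact (Disjoint.closure_right (disjoint_right.2 fun a ha haP =>
        notMem_P ha (interior_subset haP)) isOpen_interior).mono_left hAP
  obtain ⟨L', hL', hdisj⟩ := exists_isSeparator_of_separatedNhds hsep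
  refine ⟨L', hL'.mono subset_union_right subset_union_right, fun a haL' => ?_⟩
  by_contra haL
  have haUV : a ∈ (↑) ⁻¹' U ∪ (↑) ⁻¹' V := hLUV ▸ haL
  exact disjoint_left.1 hdisj haL'
    (haUV.imp (fun haU => .inl ⟨a.2, haU⟩) fun haV => .inl ⟨a.2, haV⟩)

theorem IsEssentialFamily.of_preimage {A B : Γ → Set X} {f : Y → X} (hf : Continuous f)
    (h : IsEssentialFamily (fun i => f ⁻¹' A i) fun i => f ⁻¹' B i) : IsEssentialFamily A B := by
  intro L hL
  obtain ⟨y, hy⟩ := h _ fun i => (hL i).preimage hf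
  exact ⟨f y, mem_iInter.2 fun i => mem_iInter.1 hy i⟩

theorem isEssentialFamily_of_forall_finset [CompactSpace X] {A B : Γ → Set X}
    (h : ∀ t : Finset Γ, IsEssentialFamily (fun i : t => A i) fun i : t => B i) :
    IsEssentialFamily A B := by
  intro L hL
  have hfin := isCompact_univ.inter_iInter_nonempty L (fun i => (hL i).1) fun t => by
    obtain ⟨a, ha⟩ := h t (fun i => L i) fun i => hL i
    exact ⟨a, mem_univ a, mem_iInter₂.2 fun i hi => mem_iInter.1 ha ⟨i, hi⟩⟩
  exact hfin.mono inter_subset_right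

theorem exists_isClopen_of_forall_disjoint_connectedComponent [CompactSpace X] [T2Space X]
    {A B : Set X} (hA : IsClosed A) (hB : IsClosed B)
    (h : ∀ a ∈ A, Disjoint (connectedComponent a) B) :
    ∃ Z, IsClopen Z ∧ A ⊆ Z ∧ Disjoint Z B := by
  let π : X → ConnectedComponents X := (↑)
  have hπ : Continuous π := ConnectedComponents.continuous_coe
  have hdisj : π '' A ⊆ (π '' B)ᶜ := by
    rintro _ ⟨a, ha, rfl⟩ ⟨b, hb, hba⟩
    exact disjoint_left.1 (h a ha) (ConnectedComponents.coe_eq_coe'.1 hba) hb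
  obtain ⟨Z, hZ, hAZ, hZB⟩ := exists_clopen_of_closed_subset_open
    (hπ.isClosedMap _ hA) (hπ.isClosedMap _ hB).isOpen_compl hdisj
  exact ⟨π ⁻¹' Z, hZ.preimage hπ, image_subset_iff.1 hAZ,
    disjoint_left.2 fun b hbZ hb => hZB hbZ (mem_image_of_mem π hb)⟩

theorem exists_continuum_or_exists_isSeparator_disjoint [CompactSpace X] [T2Space X]
    {A B K : Set X} (hA : IsClosed A) (hB : IsClosed B) (hAB : Disjoint A B) (hK : IsClosed K) :
    (∃ C ⊆ K, IsCompact C ∧ IsConnected C ∧ (C ∩ A).Nonempty ∧ (C ∩ B).Nonempty) ∨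
      ∃ L, IsSeparator A B L ∧ Disjoint L K := by
  have : CompactSpace K := isCompact_iff_compactSpace.1 hK.isCompact
  by_cases h : ∀ a ∈ ((↑) : K → X) ⁻¹' A, Disjoint (connectedComponent a) ((↑) ⁻¹' B)
  · right
    obtain ⟨Z, hZ, hAZ, hZB⟩ := exists_isClopen_of_forall_disjoint_connectedComponent
      (hA.preimage continuous_subtype_val) (hB.preimage continuous_subtype_val) h
    have hdisj : Disjoint ((↑) '' Z ∪ A) ((↑) '' Zᶜ ∪ B) := by
      rw [disjoint_union_left, disjoint_union_right, disjoint_union_right]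
      refine ⟨⟨(disjoint_image_iff Subtype.val_injective).2 disjoint_compl_right, ?_⟩, ?_, hAB⟩
      · exact disjoint_image_left.2 hZB
      · exact disjoint_image_right.2 (disjoint_compl_right.mono_left hAZ)
    obtain ⟨L, hL, hdisj⟩ := exists_isSeparator_of_separatedNhds <| normal_separation
      ((hK.isClosedEmbedding_subtypeVal.isClosedMap _ hZ.isClosed).union hA)
      ((hK.isClosedEmbedding_subtypeVal.isClosedMap _ hZ.compl.isClosed).union hB) hdisj
    refine ⟨L, hL.mono subset_union_right subset_union_right, hdisj.mono_right fun a ha => ?_⟩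
    by_cases haZ : (⟨a, ha⟩ : K) ∈ Z
    · exact .inl (.inl ⟨_, haZ, rfl⟩)
    · exact .inr (.inl ⟨_, haZ, rfl⟩)
  · left
    push Not at h
    obtain ⟨a, haA, hmeet⟩ := h
    obtain ⟨b, hb, hbB⟩ := not_disjoint_iff.1 hmeet
    exact ⟨(↑) '' connectedComponent a, Subtype.coe_image_subset K _,
      isClosed_connectedComponent.isCompact.image continuous_subtype_val,
      isConnected_connectedComponent.image _ continuous_subtype_val.continuousOn,
      ⟨a, mem_image_of_mem _ mem_connectedComponent, haA⟩, ⟨b, mem_image_of_mem _ hb, hbB⟩⟩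

theorem IsEssentialFamily.exists_continuum [CompactSpace X] [T2Space X] {A B : Γ → Set X}
    (h : IsEssentialFamily A B) {i₀ : Γ} (hA : IsClosed (A i₀)) (hB : IsClosed (B i₀))
    (hAB : Disjoint (A i₀) (B i₀)) {L : Γ → Set X}
    (hL : ∀ i ≠ i₀, IsSeparator (A i) (B i) (L i)) :
    ∃ C ⊆ ⋂ i ≠ i₀, L i, IsCompact C ∧ IsConnected C ∧
      (C ∩ A i₀).Nonempty ∧ (C ∩ B i₀).Nonempty := by
  classical
  refine (exists_continuum_or_exists_isSeparator_disjoint hA hB hAB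
    (isClosed_biInter fun i hi => (hL i hi).1)).resolve_right ?_
  rintro ⟨L₀, hL₀, hdisj⟩
  obtain ⟨a, ha⟩ := h (Function.update L i₀ L₀) fun i => by
    obtain rfl | hi := eq_or_ne i i₀
    · simpa using hL₀
    · simpa [hi] using hL i hi
  rw [mem_iInter] at ha
  exact disjoint_left.1 hdisj (by simpa using ha i₀)
    (mem_iInter₂.2 fun i (hi : i ≠ i₀) => by simpa [hi] using ha i)

end Separators

/-! ### Kuhn's cubical lemma -/

/-- A mod 2 cochain, of all degrees at once, on the cubical lattice `ℕ^ι`: a cube is given by its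
lowest vertex `v` and the set `s` of directions it extends in. -/
abbrev CubeCochain (ι : Type*) : Type _ := (ι → ℕ) → Finset ι → ZMod 2

namespace CubeCochain

variable {ι : Type*} [DecidableEq ι]

/-- The highest vertex of the cube `(v, s)`, so that `Icc v (topVertex v s)` is its vertex set. -/
def topVertex (v : ι → ℕ) (s : Finset ι) : ι → ℕ := s.piecewise (v + 1) v

theorem le_topVertex (v : ι → ℕ) (s : Finset ι) : v ≤ topVertex v s :=
  s.le_piecewise_of_le_of_le (by simp) le_rfl

theorem topVertex_apply_of_notMem {s : Finset ι} {p : ι} (hp : p ∉ s) (v : ι → ℕ) :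
    topVertex v s p = v p :=
  s.piecewise_eq_of_notMem _ _ hp

theorem topVertex_mono (v : ι → ℕ) : Monotone (topVertex v) := by
  intro s t hst p
  by_cases hp : p ∈ s
  · simp [topVertex, hp, hst hp]
  · exact (topVertex_apply_of_notMem hp v).trans_le (le_topVertex v t p)

theorem topVertex_add_single_erase {s : Finset ι} {p : ι} (hp : p ∈ s) (v : ι → ℕ) :
    topVertex (v + Pi.single p 1) (s.erase p) = topVertex v s := by
  ext q
  obtain rfl | hq := eq_or_ne q p
  · simp [topVertex, hp]
  · simp [topVertex, Finset.piecewise, hq]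

theorem topVertex_univ [Fintype ι] (v : ι → ℕ) : topVertex v Finset.univ = v + 1 :=
  Finset.piecewise_univ _ _

/-- The cubical coboundary: the sum over the two facets of the cube in each of its directions. -/
def coboundary (w : CubeCochain ι) : CubeCochain ι := fun v s =>
  ∑ p ∈ s, (w v (s.erase p) + w (v + Pi.single p 1) (s.erase p))

/-- The cup product of a cochain with the `0`-cochain `f`, which is evaluated at the last vertex. -/
def cupVertex (w : CubeCochain ι) (f : (ι → ℕ) → ZMod 2) : CubeCochain ι := fun v s =>
  w v s * f (topVertex v s)

theorem coboundary_coboundary (w : CubeCochain ι) : coboundary (coboundary w) = 0 := by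
  ext v s
  simp only [coboundary, ← Finset.sum_add_distrib, Finset.sum_sigma', Pi.zero_apply]
  refine Finset.sum_involution (fun pq _ => ⟨pq.2, pq.1⟩) ?cancel ?ne ?mem fun _ _ => rfl
  case cancel =>
    rintro ⟨p, q⟩ -
    rw [Finset.erase_right_comm, add_right_comm v]
    grind
  case ne =>
    rintro ⟨p, q⟩ hpq - hswap
    exact Finset.ne_of_mem_erase (Finset.mem_sigma.1 hpq).2 (congrArg Sigma.fst hswap)
  case mem =>
    rintro ⟨p, q⟩ hpq
    simp only [Finset.mem_sigma, Finset.mem_erase] at hpq ⊢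
    exact ⟨hpq.2.2, hpq.2.1.symm, hpq.1⟩

-- The Leibniz rule `δ(w ∪ f) = w ∪ δf` for a cocycle `w`.
theorem coboundary_cupVertex {w : CubeCochain ι} (hw : coboundary w = 0) (f : (ι → ℕ) → ZMod 2)
    (v : ι → ℕ) (s : Finset ι) :
    coboundary (cupVertex w f) v s =
      ∑ p ∈ s, w v (s.erase p) * (f (topVertex v (s.erase p)) + f (topVertex v s)) := by
  have hcocycle : coboundary w v s * f (topVertex v s) = 0 := by simp [hw]
  rw [← add_zero (coboundary _ v s), ← hcocycle, coboundary, coboundary, Finset.sum_mul,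
    ← Finset.sum_add_distrib]
  refine Finset.sum_congr rfl fun p hp => ?_
  rw [cupVertex, cupVertex, topVertex_add_single_erase hp]
  linear_combination
    CharTwo.add_self_eq_zero (w (v + Pi.single p 1) (s.erase p) * f (topVertex v s))

/-- The iterated cup product of the coboundaries of the labels `b i`, for `i` in a list. -/
def labelCocycle (b : ι → (ι → ℕ) → ZMod 2) : List ι → CubeCochain ι
  | [] => fun _ s => if s = ∅ then 1 else 0
  | i :: l => coboundary (cupVertex (labelCocycle b l) (b i))

theorem coboundary_labelCocycle (b : ι → (ι → ℕ) → ZMod 2) :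
    ∀ l : List ι, coboundary (labelCocycle b l) = 0
  | [] => by
    ext v s
    exact Finset.sum_eq_zero fun _ _ => CharTwo.add_self_eq_zero _
  | _ :: _ => coboundary_coboundary _

theorem nontrivial_image_Icc_of_labelCocycle_ne_zero {b : ι → (ι → ℕ) → ZMod 2} {l : List ι}
    {v : ι → ℕ} {s : Finset ι} (h : labelCocycle b l v s ≠ 0) {j : ι} (hj : j ∈ l) :
    (b j '' Icc v (topVertex v s)).Nontrivial := by
  induction l generalizing s with
  | nil => simp at hj
  | cons i l ih =>
    rw [labelCocycle, coboundary_cupVertex (coboundary_labelCocycle b l)] at h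
    obtain ⟨p, -, hne⟩ := Finset.exists_ne_zero_of_sum_ne_zero h
    have hfacet : topVertex v (s.erase p) ≤ topVertex v s :=
      topVertex_mono v (s.erase_subset p)
    obtain rfl | hjl := List.mem_cons.1 hj
    · refine ⟨_, mem_image_of_mem _ ⟨le_topVertex v _, hfacet⟩,
        _, mem_image_of_mem _ ⟨le_topVertex v s, le_rfl⟩, fun heq => ?_⟩
      exact right_ne_zero_of_mul hne (by rw [heq, CharTwo.add_self_eq_zero])
    · exact (ih (left_ne_zero_of_mul hne) hjl).mono
        (image_mono (Icc_subset_Icc_right hfacet))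

section Box

variable [Fintype ι]

/-- The lowest vertices of the unit cubes, with directions `s`, that tile the face of
`[0, N]^ι` where all coordinates outside `s` are `N`. -/
def box (N : ℕ) (s : Finset ι) : Finset (ι → ℕ) :=
  Fintype.piFinset fun p => if p ∈ s then Finset.range N else {N}

variable {N : ℕ} {s : Finset ι} {p : ι}

theorem apply_eq_of_mem_box {v : ι → ℕ} (hv : v ∈ box N s) (hp : p ∉ s) : v p = N := by
  simpa [hp] using Fintype.mem_piFinset.1 hv p

theorem sum_box_eq_sum_box_erase {M : Type*} [AddCommMonoid M] (hp : p ∈ s)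
    (g : (ι → ℕ) → M) :
    ∑ v ∈ box N s, g v =
      ∑ v ∈ box N (s.erase p), ∑ x ∈ Finset.range N, g (Function.update v p x) := by
  rw [Finset.sum_sigma']
  refine Finset.sum_bij' (fun v _ => ⟨Function.update v p N, v p⟩)
    (fun vx _ => Function.update vx.1 p vx.2) ?_ ?_ ?_ ?_ ?_
  · intro v hv
    simp only [box, Finset.mem_sigma, Fintype.mem_piFinset, Finset.mem_erase] at hv ⊢
    refine ⟨fun q => ?_, by simpa [hp] using hv p⟩
    obtain rfl | hq := eq_or_ne q p
    · simp
    · simpa [hq] using hv q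
  · rintro ⟨v, x⟩ hvx
    simp only [box, Finset.mem_sigma, Fintype.mem_piFinset, Finset.mem_erase] at hvx ⊢
    intro q
    obtain rfl | hq := eq_or_ne q p
    · simpa [hp] using hvx.2
    · simpa [hq] using hvx.1 q
  · simp
  · rintro ⟨v, x⟩ hvx
    have hvp := apply_eq_of_mem_box (Finset.mem_sigma.1 hvx).1 (Finset.notMem_erase p s)
    simp [← hvp]
  · simp

theorem sum_box_add_shift (hp : p ∈ s) (g : (ι → ℕ) → ZMod 2) :
    ∑ v ∈ box N s, (g v + g (v + Pi.single p 1)) =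
      ∑ v ∈ box N (s.erase p), (g (Function.update v p 0) + g v) := by
  have hshift (v : ι → ℕ) (x : ℕ) :
      Function.update v p x + Pi.single p 1 = Function.update v p (x + 1) := by
    ext q
    obtain rfl | hq := eq_or_ne q p <;> simp [*]
  rw [sum_box_eq_sum_box_erase hp]
  refine Finset.sum_congr rfl fun v hv => ?_
  have hvp : Function.update v p N = v := by
    rw [← apply_eq_of_mem_box hv (Finset.notMem_erase p s), Function.update_eq_self]
  have htele := Finset.sum_range_sub (fun x => g (Function.update v p x)) N
  simp only [CharTwo.sub_eq_add, hvp] at htele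
  rw [add_comm (g _) (g v), ← htele]
  exact Finset.sum_congr rfl fun x _ => by rw [hshift, add_comm]

theorem sum_box_coboundary (w : CubeCochain ι) (s : Finset ι) :
    ∑ v ∈ box N s, coboundary w v s =
      ∑ p ∈ s, ∑ v ∈ box N (s.erase p),
        (w (Function.update v p 0) (s.erase p) + w v (s.erase p)) := by
  simp only [coboundary]
  rw [Finset.sum_comm]
  exact Finset.sum_congr rfl fun p hp => sum_box_add_shift hp fun v => w v (s.erase p)

end Box

theorem labelCocycle_eq_zero_of_mem_boundary {N : ℕ} {b : ι → (ι → ℕ) → ZMod 2}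
    (h0 : ∀ i v, v i = 0 → b i v = 0) (h1 : ∀ i v, v i = N → b i v = 1) {l : List ι} {v : ι → ℕ}
    {s : Finset ι} {p : ι} (hpl : p ∈ l) (hps : p ∉ s) (hv : v p = 0 ∨ v p = N) :
    labelCocycle b l v s = 0 := by
  by_contra hne
  obtain ⟨_, ⟨u, hu, rfl⟩, _, ⟨u', hu', rfl⟩, hlabel⟩ :=
    nontrivial_image_Icc_of_labelCocycle_ne_zero hne hpl
  have apply_eq {u : ι → ℕ} (hu : u ∈ Icc v (topVertex v s)) : u p = v p :=
    le_antisymm ((hu.2 p).trans_eq (topVertex_apply_of_notMem hps v)) (hu.1 p)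
  obtain hv | hv := hv
  · exact hlabel (by rw [h0 p u (by rw [apply_eq hu, hv]), h0 p u' (by rw [apply_eq hu', hv])])
  · exact hlabel (by rw [h1 p u (by rw [apply_eq hu, hv]), h1 p u' (by rw [apply_eq hu', hv])])

theorem sum_box_labelCocycle [Fintype ι] {N : ℕ} {b : ι → (ι → ℕ) → ZMod 2}
    (h0 : ∀ i v, v i = 0 → b i v = 0) (h1 : ∀ i v, v i = N → b i v = 1) {l : List ι}
    (hl : l.Nodup) :
    ∑ v ∈ box N l.toFinset, labelCocycle b l v l.toFinset = 1 := by
  induction l with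
  | nil => simp [box, labelCocycle, Fintype.piFinset_singleton]
  | cons i l ih =>
    obtain ⟨hil, hl⟩ := List.nodup_cons.1 hl
    have hil' : i ∉ l.toFinset := by simpa using hil
    rw [labelCocycle, sum_box_coboundary, List.toFinset_cons, Finset.sum_insert hil',
      Finset.erase_insert hil', Finset.sum_eq_zero (s := l.toFinset), add_zero, ← ih hl]
    · refine Finset.sum_congr rfl fun v hv => ?_
      have hbottom : b i (topVertex (Function.update v i 0) l.toFinset) = 0 :=
        h0 i _ (by simp [topVertex_apply_of_notMem hil'])
      have htop : b i (topVertex v l.toFinset) = 1 :=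
        h1 i _ (by rw [topVertex_apply_of_notMem hil', apply_eq_of_mem_box hv hil'])
      simp only [cupVertex, hbottom, htop, mul_zero, mul_one, zero_add]
    · intro p hp
      have hpl : p ∈ l := List.mem_toFinset.1 hp
      have hperase : p ∉ (insert i l.toFinset).erase p := Finset.notMem_erase _ _
      refine Finset.sum_eq_zero fun v hv => ?_
      rw [cupVertex, cupVertex,
        labelCocycle_eq_zero_of_mem_boundary h0 h1 hpl hperase (.inl (by simp)),
        labelCocycle_eq_zero_of_mem_boundary h0 h1 hpl hperase
          (.inr (apply_eq_of_mem_box hv hperase)), zero_mul, zero_mul, add_zero]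

end CubeCochain

open CubeCochain in
theorem exists_forall_nontrivial_image_Icc_of_boundary_labels {ι : Type*} [Finite ι] {N : ℕ}
    {b : ι → (ι → ℕ) → ZMod 2} (h0 : ∀ i v, v i = 0 → b i v = 0)
    (h1 : ∀ i v, v i = N → b i v = 1) : ∃ v, ∀ i, (b i '' Icc v (v + 1)).Nontrivial := by
  classical
  have := Fintype.ofFinite ι
  have hsum := sum_box_labelCocycle h0 h1 (Finset.univ : Finset ι).nodup_toList
  rw [Finset.toList_toFinset] at hsum
  obtain ⟨v, -, hv⟩ := Finset.exists_ne_zero_of_sum_ne_zero (hsum.trans_ne one_ne_zero)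
  refine ⟨v, fun i => ?_⟩
  rw [← topVertex_univ]
  exact nontrivial_image_Icc_of_labelCocycle_ne_zero hv (Finset.mem_toList.2 (Finset.mem_univ i))

/-! ### Faces of cubes are essential -/

section Cubes

variable {ι : Type*}

/-- The point `v / N` of the grid of mesh `1 / N` in the cube, with coordinates exceeding `1`
truncated to `1`. -/
noncomputable def gridPoint (N : ℕ) (v : ι → ℕ) : ι → I := fun i =>
  projIcc 0 1 zero_le_one ((v i : ℝ) / N)

theorem gridPoint_apply_eq_zero {N : ℕ} {v : ι → ℕ} {i : ι} (hi : v i = 0) :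
    gridPoint N v i = 0 := by
  simp [gridPoint, hi]

theorem gridPoint_apply_eq_one {N : ℕ} (hN : N ≠ 0) {v : ι → ℕ} {i : ι} (hi : v i = N) :
    gridPoint N v i = 1 := by
  simp [gridPoint, hi, hN]

theorem dist_gridPoint_le [Fintype ι] (N : ℕ) {v u : ι → ℕ} (hu : u ∈ Icc v (v + 1)) :
    dist (gridPoint N u) (gridPoint N v) ≤ 1 / N := by
  refine (dist_pi_le_iff (by positivity)).2 fun i => ?_
  have hvu : (v i : ℝ) ≤ u i := by exact_mod_cast hu.1 i
  have huv : (u i : ℝ) ≤ v i + 1 := by exact_mod_cast hu.2 i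
  calc dist (gridPoint N u i) (gridPoint N v i)
      ≤ dist ((u i : ℝ) / N) (v i / N) := by
        simpa [gridPoint] using
          (LipschitzWith.projIcc (zero_le_one (α := ℝ))).dist_le_mul (u i / N) (v i / N)
    _ = (u i - v i) / N := by
        rw [Real.dist_eq, ← sub_div, abs_of_nonneg (div_nonneg (by linarith) (by positivity))]
    _ ≤ 1 / N := by gcongr; linarith

theorem isEssentialFamily_cube_faces_of_finite [Finite ι] :
    IsEssentialFamily (fun i : ι => {a : ι → I | a i = 0}) fun i => {a | a i = 1} := by
  classical
  have := Fintype.ofFinite ι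
  intro L hL
  choose _ U V hU hV hUV hAU hBV hLUV using hL
  by_contra hempty
  have hcover : univ ⊆ ⋃ k, Sum.elim U V k := by
    intro a _
    obtain ⟨i, hi⟩ : ∃ i, a ∈ (L i)ᶜ := by
      by_contra! h
      exact hempty ⟨a, mem_iInter.2 fun i => not_not.1 (h i)⟩
    rw [hLUV] at hi
    exact mem_iUnion.2 (hi.elim (fun haU => ⟨.inl i, haU⟩) fun haV => ⟨.inr i, haV⟩)
  obtain ⟨δ, hδ, hball⟩ := lebesgue_number_lemma_of_metric isCompact_univ
    (Sum.forall.2 ⟨hU, hV⟩) hcover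
  obtain ⟨n, hn⟩ := exists_nat_one_div_lt hδ
  let b : ι → (ι → ℕ) → ZMod 2 := fun i v => if gridPoint (n + 1) v ∈ U i then 0 else 1
  have label_eq_one {i : ι} {v : ι → ℕ} (hv : gridPoint (n + 1) v ∈ V i) : b i v = 1 :=
    if_neg fun hvU => disjoint_left.1 (hUV i) hvU hv
  obtain ⟨v, hv⟩ := exists_forall_nontrivial_image_Icc_of_boundary_labels (b := b) (N := n + 1)
    (fun i v hi => if_pos (hAU i (gridPoint_apply_eq_zero hi)))
    fun i v hi => label_eq_one (hBV i (gridPoint_apply_eq_one n.succ_ne_zero hi))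
  have mem_ball {u : ι → ℕ} (hu : u ∈ Icc v (v + 1)) :
      gridPoint (n + 1) u ∈ Metric.ball (gridPoint (n + 1) v) δ :=
    (dist_gridPoint_le (n + 1) hu).trans_lt (by exact_mod_cast hn)
  obtain ⟨i | i, hi⟩ := hball _ (mem_univ (gridPoint (n + 1) v))
  all_goals
    obtain ⟨_, ⟨u, hu, rfl⟩, _, ⟨u', hu', rfl⟩, hne⟩ := hv i
  · exact hne ((if_pos (hi (mem_ball hu))).trans (if_pos (hi (mem_ball hu'))).symm)
  · exact hne ((label_eq_one (hi (mem_ball hu))).trans (label_eq_one (hi (mem_ball hu'))).symm)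

theorem isEssentialFamily_cube_faces :
    IsEssentialFamily (fun i : ι => {a : ι → I | a i = 0}) fun i => {a | a i = 1} := by
  classical
  refine isEssentialFamily_of_forall_finset fun t => ?_
  let extend : (t → I) → ι → I := fun a i => if h : i ∈ t then a ⟨i, h⟩ else 0
  have continuous_extend : Continuous extend := by
    refine continuous_pi fun i => ?_
    by_cases h : i ∈ t
    · simpa only [extend, h, dite_true] using continuous_apply _
    · simpa only [extend, h, dite_false] using continuous_const
  refine .of_preimage continuous_extend ?_
  have extend_apply (a : t → I) (i : t) : extend a i = a i := by simp [extend]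
  simpa only [preimage_ofPred_eq, extend_apply] using isEssentialFamily_cube_faces_of_finite

end Cubes

/-! ### Suspensions of the Hilbert cube -/

/-- `φ` parametrises a suspension of the Hilbert cube with vertices `x` and `y`: the coordinate
`none` is the height, the coordinates `some i` are those of the Hilbert cube, and off the two
vertices a point determines its Hilbert cube coordinates. -/
structure IsCubeSuspension {X : Type*} [TopologicalSpace X] (φ : (Option ℕ → I) → X) (x y : X) :
    Prop where
  continuous : Continuous φ
  map_of_height_eq_zero : ∀ a, a none = 0 → φ a = x
  map_of_height_eq_one : ∀ a, a none = 1 → φ a = y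
  apply_some_eq : ∀ a b, φ a = φ b → φ a ≠ x → φ a ≠ y → ∀ i, a (some i) = b (some i)

section Slabs

variable {ι : Type*}

/-- The part of the cube where the `i`-th coordinate is at most `1 / 3`; its interior contains the
face where that coordinate is `0`. -/
def lowerSlab (i : ι) : Set (ι → I) := {a | (a i : ℝ) ≤ 1 / 3}

/-- The part of the cube where the `i`-th coordinate is at least `2 / 3`; its interior contains the
face where that coordinate is `1`. -/
def upperSlab (i : ι) : Set (ι → I) := {a | 2 / 3 ≤ (a i : ℝ)}

theorem isClosed_lowerSlab (i : ι) : IsClosed (lowerSlab i) :=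
  isClosed_le (by fun_prop) continuous_const

theorem isClosed_upperSlab (i : ι) : IsClosed (upperSlab i) :=
  isClosed_le continuous_const (by fun_prop)

theorem face_zero_subset_interior_lowerSlab (i : ι) :
    {a : ι → I | a i = 0} ⊆ interior (lowerSlab i) := by
  intro a (ha : a i = 0)
  have hopen : IsOpen {a : ι → I | (a i : ℝ) < 1 / 3} := isOpen_lt (by fun_prop) continuous_const
  have hlt : (a i : ℝ) < 1 / 3 := by simp [ha]
  exact mem_interior.2 ⟨_, fun b (hb : (b i : ℝ) < 1 / 3) => hb.le, hopen, hlt⟩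

theorem face_one_subset_interior_upperSlab (i : ι) :
    {a : ι → I | a i = 1} ⊆ interior (upperSlab i) := by
  intro a (ha : a i = 1)
  have hopen : IsOpen {a : ι → I | 2 / 3 < (a i : ℝ)} := isOpen_lt continuous_const (by fun_prop)
  have hlt : 2 / 3 < (a i : ℝ) := by rw [ha, Icc.coe_one]; norm_num
  exact mem_interior.2 ⟨_, fun b (hb : 2 / 3 < (b i : ℝ)) => hb.le, hopen, hlt⟩

theorem isClosed_cube_face (i : ι) (t : I) : IsClosed {a : ι → I | a i = t} :=
  isClosed_eq (continuous_apply i) continuous_const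

theorem disjoint_cube_faces (i : ι) : Disjoint {a : ι → I | a i = 0} {a | a i = 1} :=
  disjoint_left.2 fun _ h0 h1 => zero_ne_one (h0.symm.trans h1)

end Slabs

namespace IsCubeSuspension

variable {X : Type*} [TopologicalSpace X] {φ : (Option ℕ → I) → X} {x y : X} {S : Set X}

theorem disjoint_preimage_image_slabs (hφ : IsCubeSuspension φ x y) (hx : x ∉ S) (hy : y ∉ S)
    (i : ℕ) : Disjoint (((↑) : S → X) ⁻¹' (φ '' lowerSlab (some i)))
      ((↑) ⁻¹' (φ '' upperSlab (some i))) := by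
  refine disjoint_left.2 ?_
  rintro ⟨z, hz⟩ ⟨a, ha, rfl : φ a = z⟩ ⟨b, hb, hba : φ b = φ a⟩
  have hab := hφ.apply_some_eq a b hba.symm (ne_of_mem_of_not_mem hz hx)
    (ne_of_mem_of_not_mem hz hy) i
  simp only [lowerSlab, upperSlab, mem_ofPred_eq, hab] at ha hb
  linarith

theorem exists_isSeparator_cube_faces (hφ : IsCubeSuspension φ x y) {i : ℕ} {L : Set S}
    (hL : IsSeparator (((↑) : S → X) ⁻¹' (φ '' lowerSlab (some i)))
      ((↑) ⁻¹' (φ '' upperSlab (some i))) L) :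
    ∃ L' : Set (Option ℕ → I), IsSeparator {a | a (some i) = 0} {a | a (some i) = 1} L' ∧
      ∀ a ∈ L', ∀ ha : φ a ∈ S, (⟨φ a, ha⟩ : S) ∈ L := by
  have hpull : IsSeparator (((↑) : φ ⁻¹' S → Option ℕ → I) ⁻¹' lowerSlab (some i))
      ((↑) ⁻¹' upperSlab (some i)) (S.restrictPreimage φ ⁻¹' L) :=
    (hL.preimage hφ.continuous.restrictPreimage).mono
      (fun _ ha => mem_image_of_mem φ ha) fun _ ha => mem_image_of_mem φ ha
  obtain ⟨L', hL', hsub⟩ := hpull.exists_extension (isClosed_cube_face (some i) 0)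
    (isClosed_cube_face (some i) 1) (disjoint_cube_faces (some i))
    (face_zero_subset_interior_lowerSlab (some i)) (face_one_subset_interior_upperSlab (some i))
  exact ⟨L', hL', fun a haL' haS => hsub (a := ⟨a, haS⟩) haL'⟩

theorem isEssentialFamily_preimage_image_slabs (hφ : IsCubeSuspension φ x y)
    (hS : ∀ C : Set X, IsCompact C → IsConnected C → x ∈ C → y ∈ C → (S ∩ C).Nonempty) :
    IsEssentialFamily (fun i => ((↑) : S → X) ⁻¹' (φ '' lowerSlab (some i)))
      fun i => (↑) ⁻¹' (φ '' upperSlab (some i)) := by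
  intro L hL
  choose L' hL' hLL' using fun i => hφ.exists_isSeparator_cube_faces (hL i)
  obtain ⟨C, hCL', hCcompact, hCconn, ⟨a, haC, ha⟩, ⟨b, hbC, hb⟩⟩ :=
    isEssentialFamily_cube_faces.exists_continuum (i₀ := none) (L := fun k => k.elim univ L')
      (isClosed_cube_face none 0) (isClosed_cube_face none 1) (disjoint_cube_faces none)
      (Option.forall.2 ⟨fun h => absurd rfl h, fun i _ => hL' i⟩)
  obtain ⟨_, hzS, c, hcC, rfl⟩ := hS (φ '' C) (hCcompact.image hφ.continuous)
    (hCconn.image φ hφ.continuous.continuousOn)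
    ⟨a, haC, hφ.map_of_height_eq_zero a ha⟩ ⟨b, hbC, hφ.map_of_height_eq_one b hb⟩
  have hcL' (i : ℕ) : c ∈ L' i := mem_iInter₂.1 (hCL' hcC) (some i) (Option.some_ne_none i)
  exact ⟨⟨φ c, hzS⟩, mem_iInter.2 fun i => hLL' i c (hcL' i) hzS⟩

theorem stronglyInfiniteDimensional [T2Space X] (hφ : IsCubeSuspension φ x y) (hx : x ∉ S)
    (hy : y ∉ S)
    (hS : ∀ C : Set X, IsCompact C → IsConnected C → x ∈ C → y ∈ C → (S ∩ C).Nonempty) :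
    StronglyInfiniteDimensional S := by
  have isClosed_preimage_image {P : Set (Option ℕ → I)} (hP : IsClosed P) :
      IsClosed (((↑) : S → X) ⁻¹' (φ '' P)) :=
    (hφ.continuous.isClosedMap P hP).preimage continuous_subtype_val
  exact ⟨_, _, fun i => ⟨isClosed_preimage_image (isClosed_lowerSlab (some i)),
    isClosed_preimage_image (isClosed_upperSlab (some i)),
    hφ.disjoint_preimage_image_slabs hx hy i⟩, hφ.isEssentialFamily_preimage_image_slabs hS⟩

end IsCubeSuspension

/-! ### Suspensions in infinite-dimensional Banach spaces -/

theorem exists_ne_zero_forall_apply_eq_zero {K V ι : Type*} [Field K] [AddCommGroup V]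
    [Module K V] [Finite ι] (hV : ¬FiniteDimensional K V) (f : ι → V →ₗ[K] K) :
    ∃ v ≠ 0, ∀ i, f i v = 0 := by
  have hker : ¬Function.Injective (LinearMap.pi f) := fun h => hV (.of_injective _ h)
  rw [injective_iff_map_eq_zero] at hker
  push Not at hker
  obtain ⟨v, hv, hv0⟩ := hker
  exact ⟨v, hv0, fun i => congrFun hv i⟩

theorem exists_seq_strongDual_triangular {𝕜 E : Type*} [RCLike 𝕜] [NormedAddCommGroup E]
    [NormedSpace 𝕜 E] (hE : ¬FiniteDimensional 𝕜 E) (g : StrongDual 𝕜 E) :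
    ∃ (e : ℕ → E) (f : ℕ → StrongDual 𝕜 E), (∀ n, ‖e n‖ = 1) ∧ (∀ n, g (e n) = 0) ∧
      (∀ n, f n (e n) ≠ 0) ∧ ∀ m n, m < n → f m (e n) = 0 := by
  classical
  obtain ⟨ef, hef, htri⟩ := exists_seq_of_forall_finset_exists
    (fun p : E × StrongDual 𝕜 E => ‖p.1‖ = 1 ∧ g p.1 = 0 ∧ p.2 p.1 ≠ 0)
    (fun p q => p.2 q.1 = 0) fun s _ => by
      obtain ⟨v, hv0, hv⟩ := exists_ne_zero_forall_apply_eq_zero hE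
        fun k : Option s => (k.elim g fun p => p.1.2 : StrongDual 𝕜 E).toLinearMap
      have hunit : ‖(‖v‖ : 𝕜)⁻¹ • v‖ = 1 := norm_smul_inv_norm hv0
      obtain ⟨f, hf⟩ := SeparatingDual.exists_ne_zero (R := 𝕜)
        (norm_ne_zero_iff.1 (hunit.trans_ne one_ne_zero))
      have map_unit {h : StrongDual 𝕜 E} (hhv : h v = 0) : h ((‖v‖ : 𝕜)⁻¹ • v) = 0 := by
        rw [map_smul, hhv, smul_zero]
      exact ⟨(_, f), ⟨hunit, map_unit (hv none), hf⟩, fun p hp => map_unit (hv (some ⟨p, hp⟩))⟩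
  exact ⟨fun n => (ef n).1, fun n => (ef n).2, fun n => (hef n).1, fun n => (hef n).2.1,
    fun n => (hef n).2.2, htri⟩

section CubeSum

variable {E : Type*} [NormedAddCommGroup E] [NormedSpace ℝ E]

/-- The map from the Hilbert cube into a normed space that sends `a` to `∑ 2⁻ⁱ aᵢ eᵢ`. -/
noncomputable def cubeSum (e : ℕ → E) (a : ℕ → I) : E := ∑' i, ((1 / 2) ^ i * a i : ℝ) • e i

variable {e : ℕ → E}

theorem norm_cubeSum_term_le (he : ∀ i, ‖e i‖ = 1) (i : ℕ) (a : ℕ → I) :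
    ‖((1 / 2) ^ i * a i : ℝ) • e i‖ ≤ (1 / 2) ^ i := by
  rw [norm_smul, he, mul_one, Real.norm_of_nonneg (mul_nonneg (by positivity) (a i).2.1)]
  exact mul_le_of_le_one_right (by positivity) (a i).2.2

variable [CompleteSpace E]

theorem continuous_cubeSum (he : ∀ i, ‖e i‖ = 1) : Continuous (cubeSum e) :=
  continuous_tsum (fun i => by fun_prop) summable_geometric_two (norm_cubeSum_term_le he)

theorem hasSum_map_cubeSum (he : ∀ i, ‖e i‖ = 1) (f : StrongDual ℝ E) (a : ℕ → I) :
    HasSum (fun i => (1 / 2) ^ i * a i * f (e i)) (f (cubeSum e a)) := by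
  have hsum : Summable fun i => ((1 / 2) ^ i * a i : ℝ) • e i :=
    .of_norm_bounded summable_geometric_two fun i => norm_cubeSum_term_le he i a
  simpa [cubeSum] using f.hasSum hsum.hasSum

theorem map_cubeSum_eq_zero (he : ∀ i, ‖e i‖ = 1) {f : StrongDual ℝ E} (hf : ∀ i, f (e i) = 0)
    (a : ℕ → I) : f (cubeSum e a) = 0 := by
  have hsum := hasSum_map_cubeSum he f a
  simp only [hf, mul_zero] at hsum
  exact hsum.unique hasSum_zero

theorem cubeSum_injective (he : ∀ i, ‖e i‖ = 1) {f : ℕ → StrongDual ℝ E}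
    (hdiag : ∀ n, f n (e n) ≠ 0) (htri : ∀ m n, m < n → f m (e n) = 0) :
    Function.Injective (cubeSum e) := by
  intro a b hab
  ext n
  induction n using Nat.strong_induction_on with
  | _ n ih =>
    have hsum := (hasSum_map_cubeSum he (f n) a).sub (hasSum_map_cubeSum he (f n) b)
    rw [hab, sub_self] at hsum
    have hterm : ∀ i ≠ n, (1 / 2) ^ i * a i * f n (e i) - (1 / 2) ^ i * b i * f n (e i) = 0 := by
      intro i hi
      obtain hlt | hgt := hi.lt_or_gt
      · rw [ih i hlt, sub_self]
      · rw [htri n i hgt, mul_zero, mul_zero, sub_self]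
    have hn := sub_eq_zero.1 ((hasSum_single n hterm).unique hsum)
    exact mul_left_cancel₀ (by positivity) (mul_right_cancel₀ (hdiag n) hn)

theorem exists_isCubeSuspension (hE : ¬FiniteDimensional ℝ E) {x y : E} (hxy : x ≠ y) :
    ∃ φ : (Option ℕ → I) → E, IsCubeSuspension φ x y := by
  obtain ⟨g, hg⟩ := SeparatingDual.exists_ne_zero (R := ℝ) (sub_ne_zero.2 hxy.symm)
  obtain ⟨e, f, he, hge, hdiag, htri⟩ := exists_seq_strongDual_triangular hE g
  let φ : (Option ℕ → I) → E := fun a =>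
    x + (a none : ℝ) • (y - x) + (a none * (1 - a none) : ℝ) • cubeSum e fun i => a (some i)
  have hφ0 (a : Option ℕ → I) (ha : a none = 0) : φ a = x := by simp [φ, ha]
  have hφ1 (a : Option ℕ → I) (ha : a none = 1) : φ a = y := by simp [φ, ha]
  have continuous_cubeSum_some : Continuous fun a : Option ℕ → I => cubeSum e fun i => a (some i) :=
    (continuous_cubeSum he).comp (by fun_prop)
  have map_φ (a : Option ℕ → I) : g (φ a) = g x + a none * g (y - x) := by
    simp [φ, map_cubeSum_eq_zero he hge]
  refine ⟨φ, by fun_prop, hφ0, hφ1, fun a b hab hax hay => ?_⟩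
  have hheight : (a none : ℝ) = b none := by
    have hgab := congrArg g hab
    rw [map_φ, map_φ] at hgab
    exact mul_right_cancel₀ hg (add_left_cancel hgab)
  have hscale : (a none * (1 - a none) : ℝ) ≠ 0 :=
    mul_ne_zero (fun h => hax (hφ0 a (Subtype.ext h)))
      fun h => hay (hφ1 a (Subtype.ext (sub_eq_zero.1 h).symm))
  have hcube : (cubeSum e fun i => a (some i)) = cubeSum e fun i => b (some i) := by
    simp only [φ, ← hheight] at hab
    exact smul_right_injective E hscale (add_left_cancel hab)
  exact congrFun (cubeSum_injective he hdiag htri hcube)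

end CubeSum

theorem not_finiteDimensional_lp {𝕜 ι : Type*} [NormedField 𝕜] [Infinite ι] (p : ENNReal) :
    ¬FiniteDimensional 𝕜 (lp (fun _ : ι => 𝕜) p) := by
  classical
  intro hfin
  have hsingle : LinearIndependent 𝕜 fun i : ι => lp.single (E := fun _ => 𝕜) p i 1 :=
    .of_comp (lpSubmodule 𝕜 (fun _ : ι => 𝕜) p).subtype (Pi.linearIndependent_single_one ι 𝕜)
  exact not_finite_iff_infinite.2 ‹_› hsingle.finite_of_isNoetherian

theorem stronglyInfiniteDimensional_of_meets_every_continuum_between_points_ellTwo_general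
    {E : Type*} [NormedAddCommGroup E] [NormedSpace ℝ E] [CompleteSpace E]
    (hE : ¬FiniteDimensional ℝ E) {x y : E} (hxy : x ≠ y) {S : Set E} (hx : x ∉ S) (hy : y ∉ S)
    (hS : ∀ C : Set E, IsCompact C → IsConnected C → x ∈ C → y ∈ C → (S ∩ C).Nonempty) :
    StronglyInfiniteDimensional S :=
  let ⟨_, hφ⟩ := exists_isCubeSuspension hE hxy
  hφ.stronglyInfiniteDimensional hx hy hS

/-- If `x ≠ y` are points of `ℓ²` outside `S ⊆ ℓ²` and `S` intersects
every continuum in `ℓ²` containing both `x` and `y`, then `S` is strongly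
infinite dimensional. -/
theorem stronglyInfiniteDimensional_of_meets_every_continuum_between_points_ellTwo
    (x y : EllTwo) (hxy : x ≠ y) (S : Set EllTwo)
    (hx : x ∉ S) (hy : y ∉ S)
    (hS : ∀ C : Set EllTwo, IsCompact C → IsConnected C →
      x ∈ C → y ∈ C → (S ∩ C).Nonempty) :
    StronglyInfiniteDimensional S := by
  exact stronglyInfiniteDimensional_of_meets_every_continuum_between_points_ellTwo_general
    (not_finiteDimensional_lp 2) hxy hx hy hS
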